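/- Suppose α₁, α₂, α₃ are not vertices of an equilateral triangle, and let z₁, z₂, z₃ ∈ ℂ with zₖ ≠ u* and zₖ ≠ v* for each k = 1, 2, 3. Then P(z₁, z₂, z₃) = 0 if and only if W⁻¹(z₁)·W⁻¹(z₂)·W⁻¹(z₃) = −1, where W⁻¹(z) := −((α₁e₂+α₂e₁+α₃e₃)/(α₁e₁+α₂e₂+α₃e₃))·((z−v*)/(z−u*)). -/

import Mathlib

/-!
For weights `e₁, e₂, e₃` with sum `0` the combination `∑ eᵢ ∏_{j ≠ i} (z - αⱼ)` is affine in `z`.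
Let `L` be this affine function for the three cube roots of `-1` and `M` the one obtained by
exchanging `e₁` and `e₂`; their zeros are `u` and `v`, so `Wi z = -M z / L z`. Each of the factors
`M - L`, `M + e₁ L`, `M + e₂ L` of `M³ - L³` is a multiple of one `z - αᵢ`. Hence the cubic `p` is
proportional to the difference of cubes `M³ - L³`, and its polarization is proportional to
`M z₁ * M z₂ * M z₃ - L z₁ * L z₂ * L z₃`.
-/

open Polynomial

section PolarForm

variable {K : Type*} [Field K]

/-- The polarization of a cubic polynomial: the symmetric function, affine in each of `x`, `y`, `z`,
whose value at `x = y = z` is the value of the cubic. Meaningful only for `(3 : K) ≠ 0`. -/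
def cubicPolarForm (q : Cubic K) (x y z : K) : K :=
  q.a * (x * y * z) + q.b / 3 * (x * y + y * z + z * x) + q.c / 3 * (x + y + z) + q.d

theorem cubicPolarForm_smul (k a b c d x y z : K) :
    cubicPolarForm ⟨k * a, k * b, k * c, k * d⟩ x y z = k * cubicPolarForm ⟨a, b, c, d⟩ x y z := by
  simp only [cubicPolarForm]
  ring

theorem cubicPolarForm_eq_prod_sub_prod (h3 : (3 : K) ≠ 0) {q : Cubic K} {m n l k : K}
    (hq : q.toPoly = (C m * X + C n) ^ 3 - (C l * X + C k) ^ 3) (x y z : K) :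
    cubicPolarForm q x y z =
      (m * x + n) * (m * y + n) * (m * z + n) - (l * x + k) * (l * y + k) * (l * z + k) := by
  obtain rfl : q = ⟨m ^ 3 - l ^ 3, 3 * (m ^ 2 * n - l ^ 2 * k),
      3 * (m * n ^ 2 - l * k ^ 2), n ^ 3 - k ^ 3⟩ := by
    rw [← Cubic.toPoly_injective, hq]
    simp only [Cubic.toPoly, map_sub, map_mul, map_pow, map_ofNat]
    ring
  simp only [cubicPolarForm, mul_div_cancel_left₀ _ h3]
  ring

end PolarForm

section LagrangeResolvent

/-- The Lagrange resolvent, with weights `e₁, e₂, e₃`, of the three quadratics obtained from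
`(z - α₁) * (z - α₂) * (z - α₃)` by omitting one factor. -/
def lagrangeResolvent {R : Type*} [CommRing R] (e₁ e₂ e₃ α₁ α₂ α₃ z : R) : R :=
  e₁ * ((z - α₂) * (z - α₃)) + e₂ * ((z - α₁) * (z - α₃)) + e₃ * ((z - α₁) * (z - α₂))

section CommRing

variable {R : Type*} [CommRing R] {e₁ e₂ e₃ : R} (α₁ α₂ α₃ z : R)

theorem lagrangeResolvent_eq_affine (he : e₁ + e₂ + e₃ = 0) :
    lagrangeResolvent e₁ e₂ e₃ α₁ α₂ α₃ z =
      (α₁ * e₁ + α₂ * e₂ + α₃ * e₃) * z + (α₁ * α₂ * e₃ + α₁ * α₃ * e₂ + α₂ * α₃ * e₁) := by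
  unfold lagrangeResolvent
  linear_combination (z ^ 2 - (α₁ + α₂ + α₃) * z) * he

theorem lagrangeResolvent_swap_sub :
    lagrangeResolvent e₂ e₁ e₃ α₁ α₂ α₃ z - lagrangeResolvent e₁ e₂ e₃ α₁ α₂ α₃ z =
      (e₂ - e₁) * (α₁ - α₂) * (z - α₃) := by
  unfold lagrangeResolvent
  ring

theorem lagrangeResolvent_swap_add_left_mul (hadd : e₁ + e₂ = 1) (hmul : e₁ * e₂ = 1) :
    lagrangeResolvent e₂ e₁ (-1) α₁ α₂ α₃ z + e₁ * lagrangeResolvent e₁ e₂ (-1) α₁ α₂ α₃ z =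
      (1 + e₁) * (α₂ - α₃) * (z - α₁) := by
  have hsq : e₁ ^ 2 = -e₂ := by linear_combination (e₁ + 1) * hadd - hmul
  unfold lagrangeResolvent
  linear_combination (z - α₂) * (z - α₃) * hsq + (z - α₁) * (z - α₃) * hmul

theorem lagrangeResolvent_swap_add_right_mul (hadd : e₁ + e₂ = 1) (hmul : e₁ * e₂ = 1) :
    lagrangeResolvent e₂ e₁ (-1) α₁ α₂ α₃ z + e₂ * lagrangeResolvent e₁ e₂ (-1) α₁ α₂ α₃ z =
      (1 + e₂) * (α₁ - α₃) * (z - α₂) := by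
  have hsq : e₂ ^ 2 = -e₁ := by linear_combination (e₂ + 1) * hadd - hmul
  unfold lagrangeResolvent
  linear_combination (z - α₁) * (z - α₃) * hsq + (z - α₂) * (z - α₃) * hmul

theorem lagrangeResolvent_swap_cube_sub_cube (hadd : e₁ + e₂ = 1) (hmul : e₁ * e₂ = 1) :
    lagrangeResolvent e₂ e₁ (-1) α₁ α₂ α₃ z ^ 3 - lagrangeResolvent e₁ e₂ (-1) α₁ α₂ α₃ z ^ 3 =
      3 * (e₂ - e₁) * ((α₁ - α₂) * (α₁ - α₃) * (α₂ - α₃)) *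
        (z - α₁) * (z - α₂) * (z - α₃) := by
  set M := lagrangeResolvent e₂ e₁ (-1) α₁ α₂ α₃ z
  set L := lagrangeResolvent e₁ e₂ (-1) α₁ α₂ α₃ z
  have hthree : (1 + e₁) * (1 + e₂) = 3 := by linear_combination hadd + hmul
  calc M ^ 3 - L ^ 3 = (M - L) * (M + e₁ * L) * (M + e₂ * L) := by
        linear_combination -(M - L) * (M * L * hadd + L ^ 2 * hmul)
    _ = (e₂ - e₁) * (α₁ - α₂) * (z - α₃) * ((1 + e₁) * (α₂ - α₃) * (z - α₁)) *
          ((1 + e₂) * (α₁ - α₃) * (z - α₂)) := by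
        rw [lagrangeResolvent_swap_sub, lagrangeResolvent_swap_add_left_mul _ _ _ _ hadd hmul,
          lagrangeResolvent_swap_add_right_mul _ _ _ _ hadd hmul]
    _ = (1 + e₁) * (1 + e₂) * (e₂ - e₁) * ((α₁ - α₂) * (α₁ - α₃) * (α₂ - α₃)) *
          (z - α₁) * (z - α₂) * (z - α₃) := by ring
    _ = _ := by rw [hthree]

end CommRing

section Field

variable {K : Type*} [Field K] {e₁ e₂ e₃ : K} (α₁ α₂ α₃ : K)

theorem lagrangeResolvent_eq_mul_sub (he : e₁ + e₂ + e₃ = 0)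
    (hne : α₁ * e₁ + α₂ * e₂ + α₃ * e₃ ≠ 0) (z : K) :
    lagrangeResolvent e₁ e₂ e₃ α₁ α₂ α₃ z =
      (α₁ * e₁ + α₂ * e₂ + α₃ * e₃) *
        (z - -((α₁ * α₂ * e₃ + α₁ * α₃ * e₂ + α₂ * α₃ * e₁) /
          (α₁ * e₁ + α₂ * e₂ + α₃ * e₃))) := by
  rw [lagrangeResolvent_eq_affine _ _ _ _ he, sub_neg_eq_add, mul_add, mul_div_cancel₀ _ hne]

theorem prod_lagrangeResolvent_swap_sub_prod (h3 : (3 : K) ≠ 0)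
    (hadd : e₁ + e₂ = 1) (hmul : e₁ * e₂ = 1) (z₁ z₂ z₃ : K) :
    lagrangeResolvent e₂ e₁ (-1) α₁ α₂ α₃ z₁ * lagrangeResolvent e₂ e₁ (-1) α₁ α₂ α₃ z₂ *
          lagrangeResolvent e₂ e₁ (-1) α₁ α₂ α₃ z₃ -
        lagrangeResolvent e₁ e₂ (-1) α₁ α₂ α₃ z₁ * lagrangeResolvent e₁ e₂ (-1) α₁ α₂ α₃ z₂ *
          lagrangeResolvent e₁ e₂ (-1) α₁ α₂ α₃ z₃ =
      3 * (e₂ - e₁) * ((α₁ - α₂) * (α₁ - α₃) * (α₂ - α₃)) *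
        cubicPolarForm ⟨1, -(α₁ + α₂ + α₃), α₁ * α₂ + α₁ * α₃ + α₂ * α₃, -(α₁ * α₂ * α₃)⟩
          z₁ z₂ z₃ := by
  have hsum : e₁ + e₂ + -1 = 0 := by linear_combination hadd
  have hsum' : e₂ + e₁ + -1 = 0 := by linear_combination hadd
  -- An identity in `K[X]`, not of values: coefficients are then comparable over a finite `K` too.
  have hcubes := lagrangeResolvent_swap_cube_sub_cube (C α₁) (C α₂) (C α₃) X
    (e₁ := C e₁) (e₂ := C e₂) (by rw [← C_add, hadd, C_1]) (by rw [← C_mul, hmul, C_1])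
  rw [lagrangeResolvent_eq_affine _ _ _ _ (by simpa using congrArg C hsum'),
    lagrangeResolvent_eq_affine _ _ _ _ (by simpa using congrArg C hsum)] at hcubes
  rw [← cubicPolarForm_smul, mul_one]
  simp only [lagrangeResolvent_eq_affine _ _ _ _ hsum, lagrangeResolvent_eq_affine _ _ _ _ hsum']
  refine (cubicPolarForm_eq_prod_sub_prod h3 ?_ z₁ z₂ z₃).symm
  rw [← Cubic.C_mul_prod_X_sub_C_eq]
  simpa [map_ofNat C 3] using hcubes.symm

end Field

end LagrangeResolvent

theorem sub_ne_zero_of_add_eq_one_of_mul_eq_one {R : Type*} [CommRing R] {x y : R}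
    (h3 : (3 : R) ≠ 0) (hadd : x + y = 1) (hmul : x * y = 1) : y - x ≠ 0 := by
  intro h
  apply h3
  linear_combination -(y - x) * h + (x + y + 1) * hadd - 4 * hmul

theorem exp_neg_pi_div_three_mul_I_add_exp_pi_div_three_mul_I :
    Complex.exp (-(Real.pi : ℂ) / 3 * Complex.I) + Complex.exp ((Real.pi : ℂ) / 3 * Complex.I) =
      1 := by
  have hcos : Complex.cos ((Real.pi : ℂ) / 3) = 1 / 2 := by
    rw [← Complex.ofReal_ofNat, ← Complex.ofReal_div, ← Complex.ofReal_cos, Real.cos_pi_div_three]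
    norm_num
  rw [neg_div, add_comm, ← Complex.two_cos, hcos, mul_one_div_cancel two_ne_zero]

theorem exp_neg_pi_div_three_mul_I_mul_exp_pi_div_three_mul_I :
    Complex.exp (-(Real.pi : ℂ) / 3 * Complex.I) * Complex.exp ((Real.pi : ℂ) / 3 * Complex.I) =
      1 := by
  rw [neg_div, neg_mul, ← Complex.exp_add, neg_add_cancel, Complex.exp_zero]

theorem stmt_7_general {K : Type*} [Field K] (h3 : (3 : K) ≠ 0) (α₁ α₂ α₃ e₁ e₂ e₃ a b c u v : K)
    (P : K → K → K → K) (Wi : K → K)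
    (hadd : e₁ + e₂ = 1) (hmul : e₁ * e₂ = 1) (he₃ : e₃ = -1)
    (h12 : α₁ ≠ α₂) (h13 : α₁ ≠ α₃) (h23 : α₂ ≠ α₃)
    (ha : a = -(α₁ + α₂ + α₃))
    (hb : b = α₁ * α₂ + α₁ * α₃ + α₂ * α₃)
    (hc : c = -(α₁ * α₂ * α₃))
    (hP : ∀ z₁ z₂ z₃, P z₁ z₂ z₃ =
      z₁ * z₂ * z₃ + a / 3 * (z₁ * z₂ + z₂ * z₃ + z₃ * z₁) + b / 3 * (z₁ + z₂ + z₃) + c)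
    (hu : u = -((α₁ * α₂ * e₃ + α₁ * α₃ * e₂ + α₂ * α₃ * e₁) /
      (α₁ * e₁ + α₂ * e₂ + α₃ * e₃)))
    (hv : v = -((α₁ * α₂ * e₃ + α₁ * α₃ * e₁ + α₂ * α₃ * e₂) /
      (α₁ * e₂ + α₂ * e₁ + α₃ * e₃)))
    (hne₁ : α₁ * e₁ + α₂ * e₂ + α₃ * e₃ ≠ 0)
    (hne₂ : α₁ * e₂ + α₂ * e₁ + α₃ * e₃ ≠ 0)
    (hWi : ∀ z, Wi z =
      -((α₁ * e₂ + α₂ * e₁ + α₃ * e₃) / (α₁ * e₁ + α₂ * e₂ + α₃ * e₃)) *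
        ((z - v) / (z - u)))
    (z₁ z₂ z₃ : K) (h₁u : z₁ ≠ u) (h₂u : z₂ ≠ u) (h₃u : z₃ ≠ u) :
    P z₁ z₂ z₃ = 0 ↔ Wi z₁ * Wi z₂ * Wi z₃ = -1 := by
  subst he₃
  let L := lagrangeResolvent e₁ e₂ (-1) α₁ α₂ α₃
  let M := lagrangeResolvent e₂ e₁ (-1) α₁ α₂ α₃
  have hL (z) : L z = (α₁ * e₁ + α₂ * e₂ + α₃ * -1) * (z - u) :=
    hu ▸ lagrangeResolvent_eq_mul_sub α₁ α₂ α₃ (by linear_combination hadd) hne₁ z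
  have hM (z) : M z = (α₁ * e₂ + α₂ * e₁ + α₃ * -1) * (z - v) :=
    hv ▸ lagrangeResolvent_eq_mul_sub α₁ α₂ α₃ (by linear_combination hadd) hne₂ z
  have hW (z) : Wi z = -(M z / L z) := by rw [hWi, hL, hM, neg_mul, div_mul_div_comm]
  have hL0 {z} (hz : z ≠ u) : L z ≠ 0 := hL z ▸ mul_ne_zero hne₁ (sub_ne_zero.2 hz)
  have hconst : 3 * (e₂ - e₁) * ((α₁ - α₂) * (α₁ - α₃) * (α₂ - α₃)) ≠ 0 := by
    simp [h3, sub_ne_zero_of_add_eq_one_of_mul_eq_one h3 hadd hmul, sub_ne_zero, h12, h13, h23]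
  have hpolar : M z₁ * M z₂ * M z₃ - L z₁ * L z₂ * L z₃ =
      3 * (e₂ - e₁) * ((α₁ - α₂) * (α₁ - α₃) * (α₂ - α₃)) * P z₁ z₂ z₃ := by
    simpa [cubicPolarForm, hP, ha, hb, hc] using
      prod_lagrangeResolvent_swap_sub_prod α₁ α₂ α₃ h3 hadd hmul z₁ z₂ z₃
  calc P z₁ z₂ z₃ = 0 ↔ M z₁ * M z₂ * M z₃ = L z₁ * L z₂ * L z₃ := by
        rw [← sub_eq_zero (b := L z₁ * L z₂ * L z₃), hpolar, mul_eq_zero_iff_left hconst]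
    _ ↔ M z₁ / L z₁ * (M z₂ / L z₂) * (M z₃ / L z₃) = 1 := by
        rw [div_mul_div_comm, div_mul_div_comm,
          div_eq_one_iff_eq (mul_ne_zero (mul_ne_zero (hL0 h₁u) (hL0 h₂u)) (hL0 h₃u))]
    _ ↔ Wi z₁ * Wi z₂ * Wi z₃ = -1 := by rw [hW, hW, hW, neg_mul_neg, mul_neg, neg_inj]

theorem stmt_7 (α₁ α₂ α₃ e₁ e₂ e₃ a b c u v : ℂ)
    (P : ℂ → ℂ → ℂ → ℂ) (Wi : ℂ → ℂ)
    (he₁ : e₁ = Complex.exp (-(Real.pi : ℂ) / 3 * Complex.I))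
    (he₂ : e₂ = Complex.exp ((Real.pi : ℂ) / 3 * Complex.I))
    (he₃ : e₃ = -1)
    (h12 : α₁ ≠ α₂) (h13 : α₁ ≠ α₃) (h23 : α₂ ≠ α₃)
    (ha : a = -(α₁ + α₂ + α₃))
    (hb : b = α₁ * α₂ + α₁ * α₃ + α₂ * α₃)
    (hc : c = -(α₁ * α₂ * α₃))
    (hP : ∀ z₁ z₂ z₃, P z₁ z₂ z₃ =
      z₁ * z₂ * z₃ + a / 3 * (z₁ * z₂ + z₂ * z₃ + z₃ * z₁) + b / 3 * (z₁ + z₂ + z₃) + c)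
    (hu : u = -((α₁ * α₂ * e₃ + α₁ * α₃ * e₂ + α₂ * α₃ * e₁) /
      (α₁ * e₁ + α₂ * e₂ + α₃ * e₃)))
    (hv : v = -((α₁ * α₂ * e₃ + α₁ * α₃ * e₁ + α₂ * α₃ * e₂) /
      (α₁ * e₂ + α₂ * e₁ + α₃ * e₃)))
    (hne₁ : α₁ * e₁ + α₂ * e₂ + α₃ * e₃ ≠ 0)
    (hne₂ : α₁ * e₂ + α₂ * e₁ + α₃ * e₃ ≠ 0)
    (hWi : ∀ z, Wi z =
      -((α₁ * e₂ + α₂ * e₁ + α₃ * e₃) / (α₁ * e₁ + α₂ * e₂ + α₃ * e₃)) *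
        ((z - v) / (z - u)))
    (z₁ z₂ z₃ : ℂ)
    (h₁u : z₁ ≠ u) (h₁v : z₁ ≠ v)
    (h₂u : z₂ ≠ u) (h₂v : z₂ ≠ v)
    (h₃u : z₃ ≠ u) (h₃v : z₃ ≠ v) :
    P z₁ z₂ z₃ = 0 ↔ Wi z₁ * Wi z₂ * Wi z₃ = -1 := by
  subst he₁ he₂
  exact stmt_7_general three_ne_zero α₁ α₂ α₃ _ _ e₃ a b c u v P Wi
    exp_neg_pi_div_three_mul_I_add_exp_pi_div_three_mul_I
    exp_neg_pi_div_three_mul_I_mul_exp_pi_div_three_mul_I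
    he₃ h12 h13 h23 ha hb hc hP hu hv hne₁ hne₂ hWi z₁ z₂ z₃ h₁u h₂u h₃u
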